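/- Let (Ω,F,P) be a probability space and let X, Y : Ω → ([0,1] → ℝ) be two random functions, measurable with respect to the product (cylinder) σ-algebra on the path space, such that for every ω both paths s ↦ X(ω,s) and s ↦ Y(ω,s) are right-continuous on [0,1) with left limits on (0,1]. Assume X and Y are independent, and that Y has no fixed discontinuities: for every s ∈ (0,1], for P-almost every ω, the left limit lim_{u↑s} Y(ω,u) equals Y(ω,s). Then for P-almost every ω, there is no s ∈ (0,1] at which both paths X(ω,·) and Y(ω,·) are discontinuous, i.e., almost surely Disc(X(ω,·)) ∩ Disc(Y(ω,·)) = ∅, where Disc(x) denotes the set of points s ∈ (0,1] with lim_{u↑s} x(u) ≠ x(s). -/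

import Mathlib

open MeasureTheory ProbabilityTheory Filter Set Topology

def ncdRel (x y : ℝ → ℝ) (ε δ : ℝ) (t : ℚ × ℚ × ℚ × ℚ) : Prop :=
  (((t.1:ℝ) ∈ Icc (0:ℝ) 1 ∧ (t.2.1:ℝ) ∈ Icc (0:ℝ) 1 ∧ (t.2.2.1:ℝ) ∈ Icc (0:ℝ) 1 ∧
    (t.2.2.2:ℝ) ∈ Icc (0:ℝ) 1) ∧
   (|(t.2.1:ℝ) - t.1| < δ ∧ |(t.2.2.1:ℝ) - t.1| < δ ∧ |(t.2.2.2:ℝ) - t.1| < δ)) ∧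
   (ε < |x t.1 - x t.2.1| ∧ ε < |y t.2.2.1 - y t.2.2.2|)

def ncdBad : Set ((ℝ → ℝ) × (ℝ → ℝ)) :=
  {p | ∃ m : ℕ, ∀ n : ℕ, ∃ t : ℚ × ℚ × ℚ × ℚ,
    ncdRel p.1 p.2 (1 / ((m:ℝ) + 1)) (1 / ((n:ℝ) + 1)) t}

lemma ncd_measurable : MeasurableSet ncdBad := by
  unfold ncdBad
  simp only [setOf_exists, setOf_forall]
  refine MeasurableSet.iUnion fun m => MeasurableSet.iInter fun n => MeasurableSet.iUnion fun t => ?_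
  unfold ncdRel
  refine MeasurableSet.inter (MeasurableSet.const _) (MeasurableSet.inter ?_ ?_)
  · have h1 : Measurable fun p : (ℝ → ℝ) × (ℝ → ℝ) => |p.1 t.1 - p.1 t.2.1| := by fun_prop
    exact measurableSet_lt measurable_const h1
  · have h1 : Measurable fun p : (ℝ → ℝ) × (ℝ → ℝ) => |p.2 t.2.2.1 - p.2 t.2.2.2| := by fun_prop
    exact measurableSet_lt measurable_const h1

lemma ncd_cont {x : ℝ → ℝ} (hr : ∀ s ∈ Ico (0:ℝ) 1, Tendsto x (𝓝[Ioc s 1] s) (𝓝 (x s)))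
    {s : ℝ} (hs : s ∈ Icc (0:ℝ) 1)
    (hl : s ∈ Ioc (0:ℝ) 1 → Tendsto x (𝓝[Ico 0 s] s) (𝓝 (x s))) :
    ContinuousWithinAt x (Icc 0 1) s := by
  have h1 : ContinuousWithinAt x (Ico 0 s) s := by
    rcases hs.1.eq_or_lt with h | h
    · subst h; simp [ContinuousWithinAt]
    · exact hl ⟨h, hs.2⟩
  have h2 : ContinuousWithinAt x (Ioc s 1) s := by
    rcases hs.2.eq_or_lt with h | h
    · subst h; simp [ContinuousWithinAt]
    · exact hr s ⟨hs.1, h⟩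
  have h3 : ContinuousWithinAt x {s} s := continuousWithinAt_singleton
  refine ((h1.union h3).union h2).mono ?_
  intro z hz
  rcases lt_trichotomy z s with h | h | h
  · exact Or.inl (Or.inl ⟨hz.1, h⟩)
  · exact Or.inl (Or.inr h)
  · exact Or.inr ⟨h, hz.2⟩

lemma ncd_osc {x : ℝ → ℝ} {s ε : ℝ} (hε : 0 < ε) (hc : ContinuousWithinAt x (Icc 0 1) s) :
    ∃ δ > 0, ∀ u ∈ Icc (0:ℝ) 1, ∀ v ∈ Icc (0:ℝ) 1, |u - s| < δ → |v - s| < δ →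
      |x u - x v| < ε := by
  obtain ⟨δ, hδ, h⟩ := Metric.continuousWithinAt_iff.1 hc (ε/2) (half_pos hε)
  refine ⟨δ, hδ, fun u hu v hv h1 h2 => ?_⟩
  have a := h hu h1
  have b := h hv h2
  rw [Real.dist_eq] at a b
  rw [abs_lt] at *
  constructor <;> linarith

lemma ncd_bad_imp {x y : ℝ → ℝ} (h : (x, y) ∈ ncdBad) :
    ∃ s ∈ Icc (0:ℝ) 1, ¬ ContinuousWithinAt x (Icc 0 1) s ∧
      ¬ ContinuousWithinAt y (Icc 0 1) s := by
  obtain ⟨m, h⟩ := h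
  choose t ht using h
  have hε : (0:ℝ) < 1 / ((m:ℝ) + 1) := by positivity
  obtain ⟨s, hs, φ, hφ, hlim⟩ := isCompact_Icc.tendsto_subseq (x := fun n => ((t n).1 : ℝ))
    (fun n => (ht n).1.1.1)
  have key : ∀ δ > 0, ∃ n, |((t n).1:ℝ) - s| < δ ∧ 1 / ((n:ℝ) + 1) < δ := by
    intro δ hδ
    have e1 := (Metric.tendsto_nhds.1 hlim) δ hδ
    have e2 := ((tendsto_one_div_add_atTop_nhds_zero_nat (𝕜 := ℝ)).comp
      hφ.tendsto_atTop).eventually (gt_mem_nhds hδ)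
    obtain ⟨k, h1, h2⟩ := (e1.and e2).exists
    exact ⟨φ k, h1, h2⟩
  refine ⟨s, hs, fun hc => ?_, fun hc => ?_⟩
  · obtain ⟨δ, hδ, H⟩ := ncd_osc hε hc
    obtain ⟨n, h1, h2⟩ := key (δ/2) (by positivity)
    obtain ⟨⟨⟨i1, i2, i3, i4⟩, ⟨d2, d3, d4⟩⟩, e1, e2⟩ := ht n
    refine absurd (H _ i1 _ i2 ?_ ?_) e1.not_gt <;> rw [abs_lt] at * <;> constructor <;> linarith
  · obtain ⟨δ, hδ, H⟩ := ncd_osc hε hc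
    obtain ⟨n, h1, h2⟩ := key (δ/2) (by positivity)
    obtain ⟨⟨⟨i1, i2, i3, i4⟩, ⟨d2, d3, d4⟩⟩, e1, e2⟩ := ht n
    refine absurd (H _ i3 _ i4 ?_ ?_) e2.not_gt <;> rw [abs_lt] at * <;> constructor <;> linarith

lemma ncd_jump {x : ℝ → ℝ} (hr : ∀ s ∈ Ico (0:ℝ) 1, Tendsto x (𝓝[Ioc s 1] s) (𝓝 (x s)))
    {s L : ℝ} (hs : s ∈ Ioc (0:ℝ) 1) (hL : Tendsto x (𝓝[Ico 0 s] s) (𝓝 L))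
    {ε δ : ℝ} (hε : 3 * ε ≤ |L - x s|) (h0 : 0 < ε) (hδ : 0 < δ) :
    ∃ u v : ℚ, (u:ℝ) ∈ Icc (0:ℝ) 1 ∧ (v:ℝ) ∈ Icc (0:ℝ) 1 ∧ |(u:ℝ) - s| < δ ∧ |(v:ℝ) - s| < δ ∧
      ε < |x u - x v| := by
  have hu : ∃ u : ℚ, (u:ℝ) ∈ Icc (0:ℝ) 1 ∧ |(u:ℝ) - s| < δ ∧ |x u - L| < ε := by
    obtain ⟨η, hη, H⟩ := Metric.tendsto_nhdsWithin_nhds.1 hL ε h0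
    obtain ⟨u, h1, h2⟩ := exists_rat_btwn (show max 0 (s - min η δ) < s from
      max_lt hs.1 (by have := lt_min hη hδ; linarith))
    obtain ⟨h3, h4⟩ := max_lt_iff.1 h1
    have h5 := min_le_left η δ
    have h6 := min_le_right η δ
    refine ⟨u, ⟨h3.le, h2.le.trans hs.2⟩, by rw [abs_lt]; constructor <;> linarith, ?_⟩
    exact H ⟨h3.le, h2⟩ (by rw [Real.dist_eq, abs_lt]; constructor <;> linarith)
  have hv : ∃ v : ℚ, (v:ℝ) ∈ Icc (0:ℝ) 1 ∧ |(v:ℝ) - s| < δ ∧ |x v - x s| < ε := by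
    rcases hs.2.eq_or_lt with h | h
    · refine ⟨1, by simp, by simp [h, hδ], by simp [h, h0]⟩
    obtain ⟨η, hη, H⟩ := Metric.tendsto_nhdsWithin_nhds.1 (hr s ⟨hs.1.le, h⟩) ε h0
    obtain ⟨u, h2, h1⟩ := exists_rat_btwn (show s < min 1 (s + min η δ) from
      lt_min h (by have := lt_min hη hδ; linarith))
    obtain ⟨h3, h4⟩ := lt_min_iff.1 h1
    have h5 := min_le_left η δ
    have h6 := min_le_right η δ
    have h7 := hs.1
    refine ⟨u, ⟨by linarith, h3.le⟩, by rw [abs_lt]; constructor <;> linarith, ?_⟩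
    exact H ⟨h2, h3.le⟩ (by rw [Real.dist_eq, abs_lt]; constructor <;> linarith)
  obtain ⟨u, a1, a2, a3⟩ := hu
  obtain ⟨v, b1, b2, b3⟩ := hv
  refine ⟨u, v, a1, b1, a2, b2, ?_⟩
  have e1 := abs_sub_le L (x u) (x s)
  have e2 := abs_sub_le (x u) (x v) (x s)
  rw [abs_sub_comm L (x u)] at e1
  linarith

lemma ncd_imp_bad {x y : ℝ → ℝ}
    (hxr : ∀ s ∈ Ico (0:ℝ) 1, Tendsto x (𝓝[Ioc s 1] s) (𝓝 (x s)))
    (hyr : ∀ s ∈ Ico (0:ℝ) 1, Tendsto y (𝓝[Ioc s 1] s) (𝓝 (y s)))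
    (hxl : ∀ s ∈ Ioc (0:ℝ) 1, ∃ L : ℝ, Tendsto x (𝓝[Ico 0 s] s) (𝓝 L))
    (hyl : ∀ s ∈ Ioc (0:ℝ) 1, ∃ L : ℝ, Tendsto y (𝓝[Ico 0 s] s) (𝓝 L))
    {s : ℝ} (hs : s ∈ Ioc (0:ℝ) 1)
    (hx : ¬ Tendsto x (𝓝[Ico 0 s] s) (𝓝 (x s)))
    (hy : ¬ Tendsto y (𝓝[Ico 0 s] s) (𝓝 (y s))) : (x, y) ∈ ncdBad := by
  obtain ⟨L, hL⟩ := hxl s hs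
  obtain ⟨M, hM⟩ := hyl s hs
  have hLs : 0 < |L - x s| := abs_pos.2 (sub_ne_zero.2 fun h => hx (h ▸ hL))
  have hMs : 0 < |M - y s| := abs_pos.2 (sub_ne_zero.2 fun h => hy (h ▸ hM))
  obtain ⟨m, hm⟩ := exists_nat_one_div_lt (show 0 < min |L - x s| |M - y s| / 3 from by positivity)
  have h1 := min_le_left |L - x s| |M - y s|
  have h2 := min_le_right |L - x s| |M - y s|
  refine ⟨m, fun n => ?_⟩
  have hε : (0:ℝ) < 1 / ((m:ℝ) + 1) := by positivity
  have hδ : (0:ℝ) < 1 / ((n:ℝ) + 1) / 2 := by positivity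
  obtain ⟨u, v, a1, a2, a3, a4, a5⟩ := ncd_jump hxr hs hL (by linarith) hε hδ
  obtain ⟨u', v', b1, b2, b3, b4, b5⟩ := ncd_jump hyr hs hM (by linarith) hε hδ
  refine ⟨(u, v, u', v'), ⟨⟨a1, a2, b1, b2⟩, ?_, ?_, ?_⟩, a5, b5⟩ <;>
    simp only <;> rw [abs_lt] at * <;> constructor <;> linarith

lemma ncd_countable {x : ℝ → ℝ}
    (hxl : ∀ s ∈ Ioc (0:ℝ) 1, ∃ L : ℝ, Tendsto x (𝓝[Ico 0 s] s) (𝓝 L)) :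
    {s | s ∈ Ioc (0:ℝ) 1 ∧ ¬ Tendsto x (𝓝[Ico 0 s] s) (𝓝 (x s))}.Countable := by
  have hc : (⋃ p : ℚ × ℚ,
      ({s : ℝ | 0 < s ∧ (p.1:ℝ) < s ∧ (∀ z ∈ Ico 0 s, (p.1:ℝ) < z → x z < p.2) ∧ (p.2:ℝ) < x s} ∪
       {s : ℝ | 0 < s ∧ (p.1:ℝ) < s ∧ (∀ z ∈ Ico 0 s, (p.1:ℝ) < z → (p.2:ℝ) < x z) ∧
          x s < p.2})).Countable := by
    refine countable_iUnion fun p => Countable.union ?_ ?_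
    · refine Set.Subsingleton.countable fun a ha b hb => ?_
      obtain ⟨a0, a1, a2, a3⟩ := ha
      obtain ⟨b0, b1, b2, b3⟩ := hb
      rcases lt_trichotomy a b with h | h | h
      · have := b2 a ⟨a0.le, h⟩ a1; linarith
      · exact h
      · have := a2 b ⟨b0.le, h⟩ b1; linarith
    · refine Set.Subsingleton.countable fun a ha b hb => ?_
      obtain ⟨a0, a1, a2, a3⟩ := ha
      obtain ⟨b0, b1, b2, b3⟩ := hb
      rcases lt_trichotomy a b with h | h | h
      · have := b2 a ⟨a0.le, h⟩ a1; linarith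
      · exact h
      · have := a2 b ⟨b0.le, h⟩ b1; linarith
  refine hc.mono ?_
  rintro s ⟨hs, hn⟩
  obtain ⟨L, hL⟩ := hxl s hs
  have hne : L ≠ x s := fun h => hn (h ▸ hL)
  have getr : ∀ Q : ℝ → Prop, (∀ᶠ z in 𝓝[Ico 0 s] s, Q z) →
      ∃ r : ℚ, (r:ℝ) < s ∧ ∀ z ∈ Ico 0 s, (r:ℝ) < z → Q z := by
    intro Q hQ
    obtain ⟨η, hη, H⟩ := Metric.eventually_nhds_iff.1 (eventually_nhdsWithin_iff.1 hQ)
    obtain ⟨r, h1, h2⟩ := exists_rat_btwn (show s - η < s by linarith)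
    refine ⟨r, h2, fun z hz hrz => H ?_ hz⟩
    have := hz.2
    rw [Real.dist_eq, abs_lt]; constructor <;> linarith
  rcases hne.lt_or_gt with h | h
  · obtain ⟨a, h1, h2⟩ := exists_rat_btwn h
    obtain ⟨r, h3, h4⟩ := getr _ (hL.eventually (gt_mem_nhds h1))
    exact mem_iUnion.2 ⟨(r, a), Or.inl ⟨hs.1, h3, h4, h2⟩⟩
  · obtain ⟨a, h1, h2⟩ := exists_rat_btwn h
    obtain ⟨r, h3, h4⟩ := getr _ (hL.eventually (lt_mem_nhds h2))
    exact mem_iUnion.2 ⟨(r, a), Or.inr ⟨hs.1, h3, h4, h1⟩⟩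

/-- Let `X, Y` be independent random càdlàg paths on `[0,1]`
(measurable for the cylinder σ-algebra on path space), where `Y` has no fixed
discontinuities. Then almost surely the paths of `X` and `Y` have no common
discontinuity point in `(0,1]`: at every `s ∈ (0,1]`, at least one of the two paths
is left-continuous at `s`. -/
theorem no_common_discontinuities
    {Ω : Type*} [MeasurableSpace Ω] (P : Measure Ω) [IsProbabilityMeasure P]
    (X Y : Ω → ℝ → ℝ)
    (hXmeas : Measurable X) (hYmeas : Measurable Y)
    (hX_right : ∀ ω, ∀ s ∈ Set.Ico (0:ℝ) 1,
      Tendsto (X ω) (nhdsWithin s (Set.Ioc s 1)) (nhds (X ω s)))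
    (hX_left : ∀ ω, ∀ s ∈ Set.Ioc (0:ℝ) 1,
      ∃ L : ℝ, Tendsto (X ω) (nhdsWithin s (Set.Ico 0 s)) (nhds L))
    (hY_right : ∀ ω, ∀ s ∈ Set.Ico (0:ℝ) 1,
      Tendsto (Y ω) (nhdsWithin s (Set.Ioc s 1)) (nhds (Y ω s)))
    (hY_left : ∀ ω, ∀ s ∈ Set.Ioc (0:ℝ) 1,
      ∃ L : ℝ, Tendsto (Y ω) (nhdsWithin s (Set.Ico 0 s)) (nhds L))
    (hindep : IndepFun X Y P)
    (hY_nofix : ∀ s ∈ Set.Ioc (0:ℝ) 1, ∀ᵐ ω ∂P,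
      Tendsto (Y ω) (nhdsWithin s (Set.Ico 0 s)) (nhds (Y ω s))) :
    ∀ᵐ ω ∂P, ∀ s ∈ Set.Ioc (0:ℝ) 1,
      Tendsto (X ω) (nhdsWithin s (Set.Ico 0 s)) (nhds (X ω s)) ∨
      Tendsto (Y ω) (nhdsWithin s (Set.Ico 0 s)) (nhds (Y ω s)) := by
  have hmap := (indepFun_iff_map_prod_eq_prod_map_map hXmeas.aemeasurable hYmeas.aemeasurable).1
    hindep
  haveI : IsProbabilityMeasure (P.map Y) := Measure.isProbabilityMeasure_map hYmeas.aemeasurable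
  haveI : IsProbabilityMeasure (P.map X) := Measure.isProbabilityMeasure_map hXmeas.aemeasurable
  have hzero : (P.map fun ω => (X ω, Y ω)) ncdBad = 0 := by
    rw [hmap, Measure.prod_apply ncd_measurable,
      lintegral_map (measurable_measure_prodMk_left ncd_measurable) hXmeas]
    have : ∀ ω, (P.map Y) (Prod.mk (X ω) ⁻¹' ncdBad) = 0 := by
      intro ω
      rw [Measure.map_apply hYmeas (measurable_prodMk_left ncd_measurable)]
      have hae := (ae_ball_iff (ncd_countable (hX_left ω))).2 (fun s hs => hY_nofix s hs.1)
      refine measure_mono_null ?_ hae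
      intro ω' hω' hcon
      obtain ⟨s, hs, h1, h2⟩ := ncd_bad_imp (show (X ω, Y ω') ∈ ncdBad from hω')
      have h3 : ¬ (s ∈ Ioc (0:ℝ) 1 → Tendsto (X ω) (𝓝[Ico 0 s] s) (𝓝 (X ω s))) :=
        fun h => h1 (ncd_cont (hX_right ω) hs h)
      have h4 := Classical.not_imp.1 h3
      exact h2 (ncd_cont (hY_right ω') hs fun _ => hcon s h4)
    simp [this]
  rw [Measure.map_apply (hXmeas.prodMk hYmeas) ncd_measurable] at hzero
  have hae : ∀ᵐ ω ∂P, (X ω, Y ω) ∉ ncdBad := measure_eq_zero_iff_ae_notMem.1 hzero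
  filter_upwards [hae] with ω hω s hs
  by_contra hcon
  rw [not_or] at hcon
  exact hω (ncd_imp_bad (hX_right ω) (hY_right ω) (hX_left ω) (hY_left ω) hs hcon.1 hcon.2)
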